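/- arXiv:2204.05017 — 2 statements merged into one kernel-verified Lean document; each statement's English description precedes it below -/
import Mathlib

section
/- Modified Klainerman–Sobolev inequality (inner region): for f ∈ C^∞(ℝ^{1+2}), t ≥ 1, s ≥ 0, δ ∈ (0,1], and any point (t,x) with |x| ≤ t/4, one has |f(t,x)| ≲ ∑_{i=0}^2 t^{-1} δ^{(i-1)s} ‖Γ̄^i f(t,·)‖_{L²(|y| ≤ t/2)}, where Γ̄ ranges over {S, H_1, H_2, Ω} and Γ̄^i denotes products of i such fields; the implicit constant is independent of t, δ, s and f. -/
open MeasureTheory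

/-- `∂_t f`. -/
noncomputable def pdt (f : ℝ × ℝ × ℝ → ℝ) (p : ℝ × ℝ × ℝ) : ℝ := fderiv ℝ f p (1, 0, 0)
/-- `∂_1 f`. -/
noncomputable def pd1 (f : ℝ × ℝ × ℝ → ℝ) (p : ℝ × ℝ × ℝ) : ℝ := fderiv ℝ f p (0, 1, 0)
/-- `∂_2 f`. -/
noncomputable def pd2 (f : ℝ × ℝ × ℝ → ℝ) (p : ℝ × ℝ × ℝ) : ℝ := fderiv ℝ f p (0, 0, 1)

/-- The Klainerman fields `Γ̄ ∈ {S, H₁, H₂, Ω}`. -/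
noncomputable def Gbar (i : Fin 4) (f : ℝ × ℝ × ℝ → ℝ) (p : ℝ × ℝ × ℝ) : ℝ :=
  if i = 0 then p.1 * pdt f p + p.2.1 * pd1 f p + p.2.2 * pd2 f p
  else if i = 1 then p.1 * pd1 f p + p.2.1 * pdt f p
  else if i = 2 then p.1 * pd2 f p + p.2.2 * pdt f p
  else p.2.1 * pd2 f p - p.2.2 * pd1 f p

/-- `L²` norm of `g(t,·)` over the disc of radius `R`. -/
noncomputable def L2ball (g : ℝ × ℝ × ℝ → ℝ) (t R : ℝ) : ℝ :=
  Real.sqrt (∫ y in {y : ℝ × ℝ | y.1 ^ 2 + y.2 ^ 2 ≤ R ^ 2}, (g (t, y.1, y.2)) ^ 2)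

/-- One-dimensional Sobolev estimate on an interval of length `h`. -/
theorem abs_le_integral_abs_add_abs_deriv {u u' : ℝ → ℝ} (hu : ∀ y, HasDerivAt u (u' y) y)
    (hu' : Continuous u') (a : ℝ) {h : ℝ} (hh : 0 < h) :
    |u a| ≤ ∫ y in a..a + h, (|u y| / h + |u' y|) := by
  have hcu : Continuous u := continuous_iff_continuousAt.2 fun y => (hu y).continuousAt
  have hderiv : ∀ y, HasDerivAt (fun y => (y - (a + h)) / h * u y)
      (1 / h * u y + (y - (a + h)) / h * u' y) y := fun y =>
    (((hasDerivAt_id y).sub_const (a + h)).div_const h).mul (hu y)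
  have hftc := intervalIntegral.integral_eq_sub_of_hasDerivAt (a := a) (b := a + h)
    (fun y _ => hderiv y) (Continuous.intervalIntegrable (by fun_prop) _ _)
  have hval : ∫ y in a..a + h, (1 / h * u y + (y - (a + h)) / h * u' y) = u a := by
    rw [hftc]; field_simp; ring
  rw [← hval]
  refine (intervalIntegral.abs_integral_le_integral_abs (by linarith)).trans ?_
  refine intervalIntegral.integral_mono_on (by linarith)
    (Continuous.intervalIntegrable (by fun_prop) _ _)
    (Continuous.intervalIntegrable (by fun_prop) _ _) fun y hy => ?_
  have hw : |(y - (a + h)) / h| ≤ 1 := by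
    rw [abs_div, abs_of_pos hh, div_le_one hh, abs_le]
    constructor <;> linarith [hy.1, hy.2]
  calc |1 / h * u y + (y - (a + h)) / h * u' y|
      ≤ |1 / h * u y| + |(y - (a + h)) / h * u' y| := abs_add_le _ _
    _ = |u y| / h + |(y - (a + h)) / h| * |u' y| := by
        rw [abs_mul, abs_mul, abs_of_pos (one_div_pos.2 hh)]; ring
    _ ≤ |u y| / h + |u' y| := by
        gcongr; exact mul_le_of_le_one_left (abs_nonneg _) hw

/-- A continuous function on the plane is integrable on bounded rectangles. -/
theorem Continuous.integrableOn_Ioc_prod {g : ℝ × ℝ → ℝ} (hg : Continuous g) (a b c d : ℝ) :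
    IntegrableOn g (Set.Ioc a b ×ˢ Set.Ioc c d) :=
  (hg.continuousOn.integrableOn_compact (isCompact_Icc.prod isCompact_Icc)).mono_set
    (Set.prod_mono Set.Ioc_subset_Icc_self Set.Ioc_subset_Icc_self)

/-- Two-dimensional Sobolev estimate at a corner of a square of side `h`. -/
theorem abs_le_setIntegral_square {g g₁ g₂ g₁₂ : ℝ × ℝ → ℝ} (hg : Continuous g)
    (hc₁ : Continuous g₁) (hc₂ : Continuous g₂) (hc₁₂ : Continuous g₁₂)
    (h₁ : ∀ a b, HasDerivAt (fun y => g (y, b)) (g₁ (a, b)) a)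
    (h₂ : ∀ a b, HasDerivAt (fun y => g (a, y)) (g₂ (a, b)) b)
    (h₁₂ : ∀ a b, HasDerivAt (fun y => g₂ (y, b)) (g₁₂ (a, b)) a)
    (a b : ℝ) {h : ℝ} (hh : 0 < h) :
    |g (a, b)| ≤ ∫ y in Set.Ioc a (a + h) ×ˢ Set.Ioc b (b + h),
      ((|g y| / h + |g₁ y|) / h + (|g₂ y| / h + |g₁₂ y|)) := by
  have hG : Continuous fun y => (|g y| / h + |g₁ y|) / h + (|g₂ y| / h + |g₁₂ y|) := by fun_prop
  have hswap : ∫ y in Set.Ioc a (a + h) ×ˢ Set.Ioc b (b + h),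
      ((|g y| / h + |g₁ y|) / h + (|g₂ y| / h + |g₁₂ y|)) =
      ∫ v in b..b + h, ∫ w in a..a + h,
        ((|g (w, v)| / h + |g₁ (w, v)|) / h + (|g₂ (w, v)| / h + |g₁₂ (w, v)|)) := by
    rw [Measure.volume_eq_prod, setIntegral_prod _ (hG.integrableOn_Ioc_prod _ _ _ _),
      ← intervalIntegral.integral_of_le (by linarith)]
    refine intervalIntegral_integral_swap (μ := volume.restrict (Set.Ioc b (b + h)))
      (f := fun w v => (|g (w, v)| / h + |g₁ (w, v)|) / h + (|g₂ (w, v)| / h + |g₁₂ (w, v)|)) ?_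
      |>.trans (intervalIntegral.integral_of_le (by linarith)).symm
    rw [Set.uIoc_of_le (by linarith), Measure.prod_restrict]
    exact hG.integrableOn_Ioc_prod _ _ _ _
  rw [hswap]
  refine (abs_le_integral_abs_add_abs_deriv (h₂ a) (by fun_prop) b hh).trans ?_
  refine intervalIntegral.integral_mono_on (by linarith)
    (Continuous.intervalIntegrable (by fun_prop) _ _)
    (Continuous.intervalIntegrable ?_ _ _) fun v _ => ?_
  · exact intervalIntegral.continuous_parametric_intervalIntegral_of_continuous'
      (by simp only [Function.uncurry_def]; fun_prop) _ _
  · rw [intervalIntegral.integral_add (Continuous.intervalIntegrable (by fun_prop) _ _)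
      (Continuous.intervalIntegrable (by fun_prop) _ _), intervalIntegral.integral_div]
    gcongr
    · exact abs_le_integral_abs_add_abs_deriv (fun w => h₁ w v) (by fun_prop) a hh
    · exact abs_le_integral_abs_add_abs_deriv (fun w => h₁₂ w v) (by fun_prop) a hh

/-- Cauchy–Schwarz on a square of side `h` contained in the disc of radius `R`. -/
theorem setIntegral_square_abs_le_L2ball {G : ℝ × ℝ × ℝ → ℝ} (hG : Continuous G) {t R a b h : ℝ}
    (hh : 0 < h) (hsub : Set.Ioc a (a + h) ×ˢ Set.Ioc b (b + h) ⊆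
      {y : ℝ × ℝ | y.1 ^ 2 + y.2 ^ 2 ≤ R ^ 2}) :
    ∫ y in Set.Ioc a (a + h) ×ˢ Set.Ioc b (b + h), |G (t, y.1, y.2)| ≤ h * L2ball G t R := by
  have hdisc : IntegrableOn (fun y : ℝ × ℝ => G (t, y.1, y.2) ^ 2)
      {y : ℝ × ℝ | y.1 ^ 2 + y.2 ^ 2 ≤ R ^ 2} := by
    refine ((by fun_prop : Continuous fun y : ℝ × ℝ =>
      G (t, y.1, y.2) ^ 2).continuousOn.integrableOn_compact
      ((isCompact_Icc (a := -|R|) (b := |R|)).prod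
        (isCompact_Icc (a := -|R|) (b := |R|)))).mono_set fun y hy => ?_
    have hy' : y.1 ^ 2 + y.2 ^ 2 ≤ R ^ 2 := hy
    exact ⟨abs_le.1 (sq_le_sq.1 (by nlinarith [sq_nonneg y.2])),
      abs_le.1 (sq_le_sq.1 (by nlinarith [sq_nonneg y.1]))⟩
  set Q := Set.Ioc a (a + h) ×ˢ Set.Ioc b (b + h) with hQ
  set J := ∫ y in Q, |G (t, y.1, y.2)|
  have hvol : volume.real Q = h * h := by
    rw [hQ, Measure.volume_eq_prod, measureReal_prod_prod]
    simp [Real.volume_real_Ioc, hh.le]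
  have hle : ∫ y in Q, G (t, y.1, y.2) ^ 2 ≤
      ∫ y in {y : ℝ × ℝ | y.1 ^ 2 + y.2 ^ 2 ≤ R ^ 2}, G (t, y.1, y.2) ^ 2 :=
    setIntegral_mono_set hdisc (Filter.Eventually.of_forall fun y => sq_nonneg _)
      hsub.eventuallyLE
  have hvar : 0 ≤ ∫ y in Q, (|G (t, y.1, y.2)| - J / h ^ 2) ^ 2 :=
    integral_nonneg fun y => sq_nonneg _
  have hexp : ∫ y in Q, (|G (t, y.1, y.2)| - J / h ^ 2) ^ 2 =
      (∫ y in Q, G (t, y.1, y.2) ^ 2) - J ^ 2 / h ^ 2 := by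
    have hi₁ : IntegrableOn (fun y : ℝ × ℝ => G (t, y.1, y.2) ^ 2) Q :=
      Continuous.integrableOn_Ioc_prod (by fun_prop) _ _ _ _
    have hi₂ : IntegrableOn (fun y : ℝ × ℝ => 2 * (J / h ^ 2) * |G (t, y.1, y.2)|) Q :=
      Continuous.integrableOn_Ioc_prod (by fun_prop) _ _ _ _
    have hi₃ : IntegrableOn (fun _ : ℝ × ℝ => (J / h ^ 2) ^ 2) Q :=
      Continuous.integrableOn_Ioc_prod (by fun_prop) _ _ _ _
    have hi₁₂ : IntegrableOn (fun y : ℝ × ℝ =>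
        G (t, y.1, y.2) ^ 2 - 2 * (J / h ^ 2) * |G (t, y.1, y.2)|) Q := hi₁.sub hi₂
    calc ∫ y in Q, (|G (t, y.1, y.2)| - J / h ^ 2) ^ 2
        = ∫ y in Q, (G (t, y.1, y.2) ^ 2 - 2 * (J / h ^ 2) * |G (t, y.1, y.2)|
            + (J / h ^ 2) ^ 2) := by
          refine integral_congr_ae (Filter.Eventually.of_forall fun y => ?_)
          simp only
          rw [sub_sq, sq_abs]; ring
      _ = (∫ y in Q, G (t, y.1, y.2) ^ 2) - 2 * (J / h ^ 2) * J + h * h * (J / h ^ 2) ^ 2 := by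
          rw [integral_add hi₁₂ hi₃, integral_sub hi₁ hi₂, integral_const_mul,
            setIntegral_const, hvol, smul_eq_mul]
      _ = _ := by field_simp; ring
  have hsq : J ^ 2 ≤ h ^ 2 * ∫ y in {y : ℝ × ℝ | y.1 ^ 2 + y.2 ^ 2 ≤ R ^ 2},
      G (t, y.1, y.2) ^ 2 := by
    rw [hexp] at hvar
    rw [← div_le_iff₀' (by positivity)]
    linarith
  have := Real.le_sqrt_of_sq_le hsq
  rwa [Real.sqrt_mul (sq_nonneg h), Real.sqrt_sq hh.le] at this

theorem ContDiff.pdt {f : ℝ × ℝ × ℝ → ℝ} (hf : ContDiff ℝ (⊤ : ℕ∞) f) :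
    ContDiff ℝ (⊤ : ℕ∞) (pdt f) :=
  (hf.fderiv_right (m := (⊤ : ℕ∞)) (by simp)).clm_apply contDiff_const

theorem ContDiff.pd1 {f : ℝ × ℝ × ℝ → ℝ} (hf : ContDiff ℝ (⊤ : ℕ∞) f) :
    ContDiff ℝ (⊤ : ℕ∞) (pd1 f) :=
  (hf.fderiv_right (m := (⊤ : ℕ∞)) (by simp)).clm_apply contDiff_const

theorem ContDiff.pd2 {f : ℝ × ℝ × ℝ → ℝ} (hf : ContDiff ℝ (⊤ : ℕ∞) f) :
    ContDiff ℝ (⊤ : ℕ∞) (pd2 f) :=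
  (hf.fderiv_right (m := (⊤ : ℕ∞)) (by simp)).clm_apply contDiff_const

theorem ContDiff.Gbar {f : ℝ × ℝ × ℝ → ℝ} (hf : ContDiff ℝ (⊤ : ℕ∞) f) (i : Fin 4) :
    ContDiff ℝ (⊤ : ℕ∞) (Gbar i f) := by
  have ht := hf.pdt
  have h1 := hf.pd1
  have h2 := hf.pd2
  unfold _root_.Gbar
  split_ifs <;> fun_prop

theorem hasDerivAt_pd1 {f : ℝ × ℝ × ℝ → ℝ} (hf : ContDiff ℝ (⊤ : ℕ∞) f) (t a b : ℝ) :
    HasDerivAt (fun y => f (t, y, b)) (pd1 f (t, a, b)) a :=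
  ((hf.differentiable (by simp)) (t, a, b)).hasFDerivAt.comp_hasDerivAt a
    ((hasDerivAt_const a t).prodMk ((hasDerivAt_id a).prodMk (hasDerivAt_const a b)))

theorem hasDerivAt_pd2 {f : ℝ × ℝ × ℝ → ℝ} (hf : ContDiff ℝ (⊤ : ℕ∞) f) (t a b : ℝ) :
    HasDerivAt (fun y => f (t, a, y)) (pd2 f (t, a, b)) b :=
  ((hf.differentiable (by simp)) (t, a, b)).hasFDerivAt.comp_hasDerivAt b
    ((hasDerivAt_const b t).prodMk ((hasDerivAt_const b a).prodMk (hasDerivAt_id b)))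

theorem Gbar_zero (f : ℝ × ℝ × ℝ → ℝ) (p : ℝ × ℝ × ℝ) :
    Gbar 0 f p = p.1 * pdt f p + p.2.1 * pd1 f p + p.2.2 * pd2 f p := if_pos rfl

theorem Gbar_one (f : ℝ × ℝ × ℝ → ℝ) (p : ℝ × ℝ × ℝ) :
    Gbar 1 f p = p.1 * pd1 f p + p.2.1 * pdt f p :=
  (if_neg (by decide)).trans (if_pos rfl)

theorem Gbar_two (f : ℝ × ℝ × ℝ → ℝ) (p : ℝ × ℝ × ℝ) :
    Gbar 2 f p = p.1 * pd2 f p + p.2.2 * pdt f p :=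
  (if_neg (by decide)).trans ((if_neg (by decide)).trans (if_pos rfl))

theorem Gbar_three (f : ℝ × ℝ × ℝ → ℝ) (p : ℝ × ℝ × ℝ) :
    Gbar 3 f p = p.2.1 * pd2 f p - p.2.2 * pd1 f p :=
  (if_neg (by decide)).trans ((if_neg (by decide)).trans (if_neg (by decide)))

theorem mul_pd1_eq (f : ℝ × ℝ × ℝ → ℝ) (t a b : ℝ) :
    (t ^ 2 - a ^ 2 - b ^ 2) * pd1 f (t, a, b) =
      t * Gbar 1 f (t, a, b) - a * Gbar 0 f (t, a, b) + b * Gbar 3 f (t, a, b) := by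
  simp only [Gbar_zero, Gbar_one, Gbar_three]
  ring

theorem mul_pd2_eq (f : ℝ × ℝ × ℝ → ℝ) (t a b : ℝ) :
    (t ^ 2 - a ^ 2 - b ^ 2) * pd2 f (t, a, b) =
      t * Gbar 2 f (t, a, b) - b * Gbar 0 f (t, a, b) - a * Gbar 3 f (t, a, b) := by
  simp only [Gbar_zero, Gbar_two, Gbar_three]
  ring

/-- If `w ≥ 3t²/4` and `w d` is a combination of three quantities with coefficients at most `t`,
then `d` gains a factor `t⁻¹`. -/
theorem abs_le_of_mul_eq_add {t w d α β γ p q r : ℝ} (ht : 0 < t) (hw : 3 / 4 * t ^ 2 ≤ w)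
    (hα : |α| ≤ t) (hβ : |β| ≤ t) (hγ : |γ| ≤ t) (h : w * d = α * p + β * q + γ * r) :
    |d| ≤ 2 / t * (|p| + |q| + |r|) := by
  have hw0 : 0 < w := lt_of_lt_of_le (by positivity) hw
  have h1 : w * |d| ≤ t * (|p| + |q| + |r|) := by
    calc w * |d| = |α * p + β * q + γ * r| := by rw [← h, abs_mul, abs_of_pos hw0]
      _ ≤ |α| * |p| + |β| * |q| + |γ| * |r| := by
          simpa only [abs_mul] using abs_add_three (α * p) (β * q) (γ * r)
      _ ≤ t * |p| + t * |q| + t * |r| := by gcongr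
      _ = _ := by ring
  have h2 : 3 / 4 * t ^ 2 * |d| ≤ t * (|p| + |q| + |r|) :=
    (mul_le_mul_of_nonneg_right hw (abs_nonneg d)).trans h1
  have h3 : 3 / 4 * t * |d| ≤ |p| + |q| + |r| := by
    refine le_of_mul_le_mul_left ?_ ht
    linarith [h2, show t * (3 / 4 * t * |d|) = 3 / 4 * t ^ 2 * |d| by ring]
  rw [div_mul_eq_mul_div, le_div_iff₀ ht]
  nlinarith [abs_nonneg d, abs_nonneg p, abs_nonneg q, abs_nonneg r]

theorem coord_bounds_of_mem_disc {t a b : ℝ} (ht : 0 < t) (h : a ^ 2 + b ^ 2 ≤ (t / 2) ^ 2) :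
    3 / 4 * t ^ 2 ≤ t ^ 2 - a ^ 2 - b ^ 2 ∧ |a| ≤ t / 2 ∧ |b| ≤ t / 2 :=
  ⟨by linarith, abs_le_of_sq_le_sq (by linarith [sq_nonneg b]) (by linarith),
    abs_le_of_sq_le_sq (by linarith [sq_nonneg a]) (by linarith)⟩

theorem abs_pd1_le (f : ℝ × ℝ × ℝ → ℝ) {t a b : ℝ} (ht : 0 < t)
    (h : a ^ 2 + b ^ 2 ≤ (t / 2) ^ 2) :
    |pd1 f (t, a, b)| ≤ 2 / t * ∑ i, |Gbar i f (t, a, b)| := by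
  obtain ⟨hw, ha, hb⟩ := coord_bounds_of_mem_disc ht h
  refine (abs_le_of_mul_eq_add (α := t) (β := -a) (γ := b) (p := Gbar 1 f (t, a, b))
    (q := Gbar 0 f (t, a, b)) (r := Gbar 3 f (t, a, b)) ht hw (abs_of_pos ht).le
    (by rw [abs_neg]; linarith) (by linarith) (by rw [mul_pd1_eq]; ring)).trans ?_
  rw [Fin.sum_univ_four]
  refine mul_le_mul_of_nonneg_left ?_ (by positivity)
  linarith [abs_nonneg (Gbar 2 f (t, a, b))]

theorem abs_pd2_le (f : ℝ × ℝ × ℝ → ℝ) {t a b : ℝ} (ht : 0 < t)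
    (h : a ^ 2 + b ^ 2 ≤ (t / 2) ^ 2) :
    |pd2 f (t, a, b)| ≤ 2 / t * ∑ i, |Gbar i f (t, a, b)| := by
  obtain ⟨hw, ha, hb⟩ := coord_bounds_of_mem_disc ht h
  refine (abs_le_of_mul_eq_add (α := t) (β := -b) (γ := -a) (p := Gbar 2 f (t, a, b))
    (q := Gbar 0 f (t, a, b)) (r := Gbar 3 f (t, a, b)) ht hw (abs_of_pos ht).le
    (by rw [abs_neg]; linarith) (by rw [abs_neg]; linarith) (by rw [mul_pd2_eq]; ring)).trans ?_
  rw [Fin.sum_univ_four]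
  refine mul_le_mul_of_nonneg_left ?_ (by positivity)
  linarith [abs_nonneg (Gbar 1 f (t, a, b))]

theorem mul_pd1_pd2_eq {f : ℝ × ℝ × ℝ → ℝ} (hf : ContDiff ℝ (⊤ : ℕ∞) f) (t a b : ℝ) :
    (t ^ 2 - a ^ 2 - b ^ 2) * pd1 (pd2 f) (t, a, b) =
      t * pd1 (Gbar 2 f) (t, a, b) - b * pd1 (Gbar 0 f) (t, a, b)
        - a * pd1 (Gbar 3 f) (t, a, b) - Gbar 3 f (t, a, b) + 2 * a * pd2 f (t, a, b) := by
  have hl : HasDerivAt (fun y => (t ^ 2 - y ^ 2 - b ^ 2) * pd2 f (t, y, b))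
      (-(2 * a) * pd2 f (t, a, b) + (t ^ 2 - a ^ 2 - b ^ 2) * pd1 (pd2 f) (t, a, b)) a := by
    refine HasDerivAt.mul ?_ (hasDerivAt_pd1 hf.pd2 t a b)
    simpa using (((hasDerivAt_pow 2 a).const_sub (t ^ 2)).sub_const (b ^ 2))
  have hr := (((hasDerivAt_pd1 (hf.Gbar 2) t a b).const_mul t).sub
    ((hasDerivAt_pd1 (hf.Gbar 0) t a b).const_mul b)).sub
    ((hasDerivAt_id a).mul (hasDerivAt_pd1 (hf.Gbar 3) t a b))
  have heq := hl.unique (hr.congr_of_eventuallyEq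
    (Filter.Eventually.of_forall fun y => mul_pd2_eq f t y b))
  simp only [id] at heq
  linarith

theorem abs_pd1_pd2_le {f : ℝ × ℝ × ℝ → ℝ} (hf : ContDiff ℝ (⊤ : ℕ∞) f) {t a b : ℝ}
    (ht : 0 < t) (h : a ^ 2 + b ^ 2 ≤ (t / 2) ^ 2) :
    |pd1 (pd2 f) (t, a, b)| ≤ 4 / t ^ 2 * (∑ i, |Gbar i f (t, a, b)| +
      ∑ i, ∑ j, |Gbar i (Gbar j f) (t, a, b)|) := by
  obtain ⟨hw, ha, hb⟩ := coord_bounds_of_mem_disc ht h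
  have hw0 : 0 < t ^ 2 - a ^ 2 - b ^ 2 := lt_of_lt_of_le (by positivity) hw
  have hΓ : ∀ j, t * |pd1 (Gbar j f) (t, a, b)| ≤ 2 * ∑ i, |Gbar i (Gbar j f) (t, a, b)| := by
    intro j
    have := mul_le_mul_of_nonneg_left (abs_pd1_le (Gbar j f) ht h) ht.le
    rwa [← mul_assoc, mul_div_cancel₀ _ ht.ne'] at this
  have h2 : t * |pd2 f (t, a, b)| ≤ 2 * ∑ i, |Gbar i f (t, a, b)| := by
    have := mul_le_mul_of_nonneg_left (abs_pd2_le f ht h) ht.le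
    rwa [← mul_assoc, mul_div_cancel₀ _ ht.ne'] at this
  have h3 : |Gbar 3 f (t, a, b)| ≤ ∑ i, |Gbar i f (t, a, b)| :=
    Finset.single_le_sum (f := fun i => |Gbar i f (t, a, b)|) (fun i _ => abs_nonneg _)
      (Finset.mem_univ 3)
  have hsum : ∑ j, t * |pd1 (Gbar j f) (t, a, b)| ≤
      2 * ∑ i, ∑ j, |Gbar i (Gbar j f) (t, a, b)| := by
    rw [Finset.sum_comm, Finset.mul_sum]
    exact Finset.sum_le_sum fun j _ => hΓ j
  rw [Fin.sum_univ_four] at hsum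
  have hnn : ∀ j, 0 ≤ t * |pd1 (Gbar j f) (t, a, b)| := fun j => by positivity
  have hmain : 3 / 4 * t ^ 2 * |pd1 (pd2 f) (t, a, b)| ≤
      3 * ∑ i, |Gbar i f (t, a, b)| + 2 * ∑ i, ∑ j, |Gbar i (Gbar j f) (t, a, b)| := by
    calc 3 / 4 * t ^ 2 * |pd1 (pd2 f) (t, a, b)|
        ≤ (t ^ 2 - a ^ 2 - b ^ 2) * |pd1 (pd2 f) (t, a, b)| := by gcongr
      _ = |t * pd1 (Gbar 2 f) (t, a, b) - b * pd1 (Gbar 0 f) (t, a, b)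
            - a * pd1 (Gbar 3 f) (t, a, b) - Gbar 3 f (t, a, b) + 2 * a * pd2 f (t, a, b)| := by
          rw [← mul_pd1_pd2_eq hf, abs_mul, abs_of_pos hw0]
      _ ≤ |t * pd1 (Gbar 2 f) (t, a, b)| + |b * pd1 (Gbar 0 f) (t, a, b)|
            + |a * pd1 (Gbar 3 f) (t, a, b)| + |Gbar 3 f (t, a, b)|
            + |2 * a * pd2 f (t, a, b)| := by
          refine (abs_add_le _ _).trans ?_
          gcongr
          refine (abs_sub _ _).trans ?_
          gcongr
          refine (abs_sub _ _).trans ?_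
          gcongr
          exact abs_sub _ _
      _ ≤ t * |pd1 (Gbar 2 f) (t, a, b)| + t * |pd1 (Gbar 0 f) (t, a, b)|
            + t * |pd1 (Gbar 3 f) (t, a, b)| + |Gbar 3 f (t, a, b)|
            + t * |pd2 f (t, a, b)| := by
          simp only [abs_mul, abs_of_pos ht, abs_two]
          gcongr <;> linarith
      _ ≤ _ := by linarith [hnn 1]
  rw [div_mul_eq_mul_div, le_div_iff₀ (by positivity)]
  linarith [Finset.sum_nonneg (s := Finset.univ) fun i _ =>
    Finset.sum_nonneg (s := Finset.univ) fun j _ => abs_nonneg (Gbar i (Gbar j f) (t, a, b))]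

/-- Modified Klainerman–Sobolev inequality (inner region): for `|x| ≤ t/4`,
`|f(t,x)| ≲ ∑_{i=0}^2 t⁻¹ δ^{(i-1)s} ‖Γ̄^i f(t,·)‖_{L²(|y| ≤ t/2)}`, with a
constant independent of `t`, `δ`, `s` and `f`. -/
theorem stmt16 :
    ∃ C : ℝ, 0 < C ∧ ∀ f : ℝ × ℝ × ℝ → ℝ, ContDiff ℝ (⊤ : ℕ∞) f →
      ∀ t s δ : ℝ, 1 ≤ t → 0 ≤ s → 0 < δ → δ ≤ 1 →
      ∀ x : ℝ × ℝ, x.1 ^ 2 + x.2 ^ 2 ≤ (t / 4) ^ 2 →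
        |f (t, x.1, x.2)| ≤
          C * (t⁻¹ * δ ^ (-s) * L2ball f t (t / 2) +
               t⁻¹ * ∑ i : Fin 4, L2ball (Gbar i f) t (t / 2) +
               t⁻¹ * δ ^ s *
                 ∑ i : Fin 4, ∑ j : Fin 4, L2ball (Gbar i (Gbar j f)) t (t / 2)) := by
  refine ⟨8, by norm_num, fun f hf t s δ ht hs hδ hδ1 x hx => ?_⟩
  have ht0 : 0 < t := by linarith
  have hl0 : 0 < δ ^ s := Real.rpow_pos_of_pos hδ s
  have hl1 : δ ^ s ≤ 1 := Real.rpow_le_one hδ.le hδ1 hs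
  rw [Real.rpow_neg hδ.le]
  set l := δ ^ s
  obtain ⟨a, b⟩ := x
  simp only at hx ⊢
  obtain ⟨h, hdef⟩ : ∃ h, h = l * t / 8 := ⟨_, rfl⟩
  have hh : 0 < h := by rw [hdef]; positivity
  have hht : h ≤ t / 8 := by rw [hdef]; nlinarith
  set Q := Set.Ioc a (a + h) ×ˢ Set.Ioc b (b + h)
  have hsub : Q ⊆ {y : ℝ × ℝ | y.1 ^ 2 + y.2 ^ 2 ≤ (t / 2) ^ 2} := by
    rintro ⟨c, d⟩ ⟨⟨hc₁, hc₂⟩, hd₁, hd₂⟩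
    simp only at hc₁ hc₂ hd₁ hd₂
    change c ^ 2 + d ^ 2 ≤ (t / 2) ^ 2
    have hc : (c - a) ^ 2 ≤ (t / 8) ^ 2 := by gcongr; linarith
    have hd : (d - b) ^ 2 ≤ (t / 8) ^ 2 := by gcongr; linarith
    linarith [sq_nonneg (c - 2 * a), sq_nonneg (d - 2 * b), sq_nonneg t]
  have hf1 := hf.pd1.continuous
  have hf2 := hf.pd2.continuous
  have hf12 := hf.pd2.pd1.continuous
  have hf0 := hf.continuous
  have hΓ := fun i => (hf.Gbar i).continuous
  have hΓΓ := fun i j => ((hf.Gbar j).Gbar i).continuous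
  have hsob := abs_le_setIntegral_square
    (g := fun y => f (t, y.1, y.2)) (g₁ := fun y => pd1 f (t, y.1, y.2))
    (g₂ := fun y => pd2 f (t, y.1, y.2)) (g₁₂ := fun y => pd1 (pd2 f) (t, y.1, y.2))
    (by fun_prop) (by fun_prop) (by fun_prop) (by fun_prop)
    (fun a b => hasDerivAt_pd1 hf t a b) (fun a b => hasDerivAt_pd2 hf t a b)
    (fun a b => hasDerivAt_pd1 hf.pd2 t a b) a b hh
  have hi0 : IntegrableOn (fun y : ℝ × ℝ => 1 / h ^ 2 * |f (t, y.1, y.2)|) Q :=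
    Continuous.integrableOn_Ioc_prod (by fun_prop) _ _ _ _
  have hi1 : IntegrableOn (fun y : ℝ × ℝ =>
      (4 / (t * h) + 4 / t ^ 2) * ∑ i, |Gbar i f (t, y.1, y.2)|) Q :=
    Continuous.integrableOn_Ioc_prod (by fun_prop) _ _ _ _
  have hi2 : IntegrableOn (fun y : ℝ × ℝ =>
      4 / t ^ 2 * ∑ i, ∑ j, |Gbar i (Gbar j f) (t, y.1, y.2)|) Q :=
    Continuous.integrableOn_Ioc_prod (by fun_prop) _ _ _ _
  have hi01 : IntegrableOn (fun y : ℝ × ℝ => 1 / h ^ 2 * |f (t, y.1, y.2)| +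
      (4 / (t * h) + 4 / t ^ 2) * ∑ i, |Gbar i f (t, y.1, y.2)|) Q := hi0.add hi1
  have hpt : ∀ y ∈ Q, (|f (t, y.1, y.2)| / h + |pd1 f (t, y.1, y.2)|) / h +
      (|pd2 f (t, y.1, y.2)| / h + |pd1 (pd2 f) (t, y.1, y.2)|) ≤
      1 / h ^ 2 * |f (t, y.1, y.2)| +
        (4 / (t * h) + 4 / t ^ 2) * ∑ i, |Gbar i f (t, y.1, y.2)| +
        4 / t ^ 2 * ∑ i, ∑ j, |Gbar i (Gbar j f) (t, y.1, y.2)| := by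
    intro y hy
    have hy' := hsub hy
    calc _ ≤ (|f (t, y.1, y.2)| / h + 2 / t * ∑ i, |Gbar i f (t, y.1, y.2)|) / h +
          (2 / t * (∑ i, |Gbar i f (t, y.1, y.2)|) / h + 4 / t ^ 2 *
            (∑ i, |Gbar i f (t, y.1, y.2)| +
              ∑ i, ∑ j, |Gbar i (Gbar j f) (t, y.1, y.2)|)) := by
          have e1 := abs_pd1_le f ht0 hy'
          have e2 := abs_pd2_le f ht0 hy'
          have e3 := abs_pd1_pd2_le hf ht0 hy'
          exact add_le_add (div_le_div_of_nonneg_right (add_le_add_right e1 _) hh.le)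
            (add_le_add (div_le_div_of_nonneg_right e2 hh.le) e3)
      _ = _ := by field_simp; ring
  have hcs := fun {G : ℝ × ℝ × ℝ → ℝ} (hG : Continuous G) =>
    setIntegral_square_abs_le_L2ball (t := t) hG hh hsub
  have habs : ∀ {G : ℝ × ℝ × ℝ → ℝ}, Continuous G →
      IntegrableOn (fun y : ℝ × ℝ => |G (t, y.1, y.2)|) Q := fun hG =>
    Continuous.integrableOn_Ioc_prod (by fun_prop) _ _ _ _
  calc |f (t, a, b)| ≤ _ := hsob
    _ ≤ ∫ y in Q, (1 / h ^ 2 * |f (t, y.1, y.2)| +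
        (4 / (t * h) + 4 / t ^ 2) * ∑ i, |Gbar i f (t, y.1, y.2)| +
        4 / t ^ 2 * ∑ i, ∑ j, |Gbar i (Gbar j f) (t, y.1, y.2)|) :=
      setIntegral_mono_on (Continuous.integrableOn_Ioc_prod (by fun_prop) _ _ _ _)
        (hi01.add hi2) (measurableSet_Ioc.prod measurableSet_Ioc) hpt
    _ = 1 / h ^ 2 * (∫ y in Q, |f (t, y.1, y.2)|) +
        (4 / (t * h) + 4 / t ^ 2) * (∑ i, ∫ y in Q, |Gbar i f (t, y.1, y.2)|) +
        4 / t ^ 2 * ∑ i, ∑ j, ∫ y in Q, |Gbar i (Gbar j f) (t, y.1, y.2)| := by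
      rw [integral_add hi01 hi2, integral_add hi0 hi1, integral_const_mul,
        integral_const_mul, integral_const_mul, integral_finsetSum _ fun i _ => habs (hΓ i),
        integral_finsetSum _ fun i _ => integrable_finsetSum _ fun j _ => habs (hΓΓ i j)]
      congr 2
      exact Finset.sum_congr rfl fun i _ => integral_finsetSum _ fun j _ => habs (hΓΓ i j)
    _ ≤ 1 / h ^ 2 * (h * L2ball f t (t / 2)) +
        (4 / (t * h) + 4 / t ^ 2) * (∑ i, h * L2ball (Gbar i f) t (t / 2)) +
        4 / t ^ 2 * ∑ i, ∑ j, h * L2ball (Gbar i (Gbar j f)) t (t / 2) := by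
      gcongr
      · exact hcs hf0
      · exact hcs (hΓ _)
      · exact hcs (hΓΓ _ _)
    _ = 8 * (t⁻¹ * l⁻¹ * L2ball f t (t / 2)) +
        (4 + l / 2) * (t⁻¹ * ∑ i, L2ball (Gbar i f) t (t / 2)) +
        1 / 2 * (t⁻¹ * l * ∑ i, ∑ j, L2ball (Gbar i (Gbar j f)) t (t / 2)) := by
      simp only [← Finset.mul_sum]
      rw [hdef]
      field_simp
      ring
    _ ≤ 8 * (t⁻¹ * l⁻¹ * L2ball f t (t / 2)) +
        8 * (t⁻¹ * ∑ i, L2ball (Gbar i f) t (t / 2)) +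
        8 * (t⁻¹ * l * ∑ i, ∑ j, L2ball (Gbar i (Gbar j f)) t (t / 2)) := by
      have hnn : ∀ G : ℝ × ℝ × ℝ → ℝ, 0 ≤ L2ball G t (t / 2) := fun G => Real.sqrt_nonneg _
      have hA1 : 0 ≤ ∑ i, L2ball (Gbar i f) t (t / 2) := Finset.sum_nonneg fun i _ => hnn _
      have hA2 : 0 ≤ ∑ i, ∑ j, L2ball (Gbar i (Gbar j f)) t (t / 2) :=
        Finset.sum_nonneg fun i _ => Finset.sum_nonneg fun j _ => hnn _
      gcongr
      · linarith
      · norm_num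
    _ = _ := by ring
end

section
/- Modified Klainerman–Sobolev inequality (outer region with boundary): for f ∈ C^∞, t ≥ 1, δ>0, and |x| ≥ t/4 with (t,x) in the region {t−|y| ≥ 2δ}, one has |f(t,x)| ≲ |f(t,B_t^x)| + t^{-1/2} ∑_{a≤1,|β|≤1}‖Ω^a∂^β f(t,·)‖_{L²(t/4 ≤ |y| ≤ t−2δ)}, where B_t^x is the point on the boundary sphere {|y|=t−2δ} on the ray from the origin through x. -/
open MeasureTheory

/-- The rotation field `Ω = x¹∂₂ − x²∂₁`. -/
noncomputable def Om (f : ℝ × ℝ × ℝ → ℝ) (p : ℝ × ℝ × ℝ) : ℝ :=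
  p.2.1 * pd2 f p - p.2.2 * pd1 f p

/-- `L²` norm of `g(t,·)` over the annulus `t/4 ≤ |y| ≤ t − 2δ`. -/
noncomputable def L2ann (g : ℝ × ℝ × ℝ → ℝ) (t δ : ℝ) : ℝ :=
  Real.sqrt (∫ y in {y : ℝ × ℝ |
      (t / 4) ^ 2 ≤ y.1 ^ 2 + y.2 ^ 2 ∧ y.1 ^ 2 + y.2 ^ 2 ≤ (t - 2 * δ) ^ 2},
    (g (t, y.1, y.2)) ^ 2)

lemma sq_le_sq_add_integral_of_hasDerivAt {H H' : ℝ → ℝ} (hd : ∀ s, HasDerivAt H (H' s) s)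
    (hc : Continuous H') {a b u v : ℝ} (hu : u ∈ Set.Icc a b) (hv : v ∈ Set.Icc a b) :
    H u ^ 2 ≤ H v ^ 2 + ∫ s in a..b, (H s ^ 2 + H' s ^ 2) := by
  have hH : Continuous H := continuous_iff_continuousAt.2 fun s => (hd s).continuousAt
  have hftc : ∫ s in v..u, 2 * H s * H' s = H u ^ 2 - H v ^ 2 :=
    intervalIntegral.integral_eq_sub_of_hasDerivAt
      (fun s _ => by simpa using (hd s).pow 2)
      (Continuous.intervalIntegrable (by fun_prop) _ _)
  have hnorm : ‖∫ s in v..u, 2 * H s * H' s‖ ≤ |∫ s in v..u, (H s ^ 2 + H' s ^ 2)| := by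
    refine intervalIntegral.norm_integral_le_abs_of_norm_le (.of_forall fun s => ?_)
      (Continuous.intervalIntegrable (by fun_prop) _ _)
    rw [Real.norm_eq_abs, abs_le]
    constructor <;> nlinarith [sq_nonneg (H s + H' s), sq_nonneg (H s - H' s)]
  have hmono : |∫ s in v..u, (H s ^ 2 + H' s ^ 2)| ≤ |∫ s in a..b, (H s ^ 2 + H' s ^ 2)| := by
    refine intervalIntegral.abs_integral_mono_interval ?_
      (.of_forall fun s => by positivity) (Continuous.intervalIntegrable (by fun_prop) _ _)
    rw [Set.uIoc_of_le (hu.1.trans hu.2)]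
    exact Set.Ioc_subset_Ioc (le_min hv.1 hu.1) (max_le hv.2 hu.2)
  rw [abs_of_nonneg (a := ∫ s in a..b, (H s ^ 2 + H' s ^ 2)) (intervalIntegral.integral_nonneg
    (hu.1.trans hu.2) fun s _ => by positivity)] at hmono
  have := (le_abs_self _).trans (hnorm.trans hmono)
  linarith

lemma sq_le_two_mul_integral_angle {H H' : ℝ → ℝ} (hd : ∀ s, HasDerivAt H (H' s) s)
    (hc : Continuous H') {u : ℝ} (hu : u ∈ Set.Icc (-Real.pi) Real.pi) :
    H u ^ 2 ≤ 2 * ∫ s in (-Real.pi)..Real.pi, (H s ^ 2 + H' s ^ 2) := by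
  have hH : Continuous H := continuous_iff_continuousAt.2 fun s => (hd s).continuousAt
  set I := ∫ s in (-Real.pi)..Real.pi, (H s ^ 2 + H' s ^ 2)
  have hpi := Real.pi_gt_three
  have hle : -Real.pi ≤ Real.pi := by linarith
  have havg : ∫ _s in (-Real.pi)..Real.pi, H u ^ 2 ≤
      ∫ s in (-Real.pi)..Real.pi, (H s ^ 2 + I) :=
    intervalIntegral.integral_mono_on hle (Continuous.intervalIntegrable (by fun_prop) _ _)
      (Continuous.intervalIntegrable (by fun_prop) _ _)
      fun s hs => sq_le_sq_add_integral_of_hasDerivAt hd hc hu hs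
  rw [intervalIntegral.integral_add (Continuous.intervalIntegrable (by fun_prop) _ _)
    (Continuous.intervalIntegrable (by fun_prop) _ _)] at havg
  simp only [intervalIntegral.integral_const, smul_eq_mul] at havg
  have hsub : ∫ s in (-Real.pi)..Real.pi, H s ^ 2 ≤ I :=
    intervalIntegral.integral_mono_on hle (Continuous.intervalIntegrable (by fun_prop) _ _)
      (Continuous.intervalIntegrable (by fun_prop) _ _)
      fun s _ => le_add_of_nonneg_right (sq_nonneg _)
  have hI0 : 0 ≤ I := intervalIntegral.integral_nonneg hle fun s _ => by positivity
  nlinarith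

lemma sq_L2ann (g : ℝ × ℝ × ℝ → ℝ) (t δ : ℝ) :
    L2ann g t δ ^ 2 = ∫ y in {y : ℝ × ℝ |
      (t / 4) ^ 2 ≤ y.1 ^ 2 + y.2 ^ 2 ∧ y.1 ^ 2 + y.2 ^ 2 ≤ (t - 2 * δ) ^ 2},
    (g (t, y.1, y.2)) ^ 2 :=
  Real.sq_sqrt (integral_nonneg fun _ => sq_nonneg _)

/-- The `L²` norm over the annulus in polar coordinates. -/
lemma sq_L2ann_eq_integral_polar {g : ℝ × ℝ × ℝ → ℝ} (hg : Continuous g) {t δ : ℝ} (ht : 0 < t)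
    (hR : t / 4 ≤ t - 2 * δ) :
    L2ann g t δ ^ 2 = ∫ r in (t / 4)..(t - 2 * δ), ∫ θ in (-Real.pi)..Real.pi,
      r * g (t, r * Real.cos θ, r * Real.sin θ) ^ 2 := by
  have hmeas : MeasurableSet {y : ℝ × ℝ |
      (t / 4) ^ 2 ≤ y.1 ^ 2 + y.2 ^ 2 ∧ y.1 ^ 2 + y.2 ^ 2 ≤ (t - 2 * δ) ^ 2} := by
    rw [Set.ofPred_and]
    exact (measurableSet_le (by fun_prop) (by fun_prop)).inter
      (measurableSet_le (by fun_prop) (by fun_prop))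
  have hsub : Set.Icc (t / 4) (t - 2 * δ) ×ˢ Set.Ioo (-Real.pi) Real.pi ⊆ polarCoord.target := by
    rintro ⟨r, θ⟩ ⟨hr, hθ⟩
    exact ⟨lt_of_lt_of_le (by positivity) hr.1, hθ⟩
  have hind : ∀ p ∈ polarCoord.target,
      p.1 • Set.indicator {y : ℝ × ℝ |
        (t / 4) ^ 2 ≤ y.1 ^ 2 + y.2 ^ 2 ∧ y.1 ^ 2 + y.2 ^ 2 ≤ (t - 2 * δ) ^ 2}
        (fun y => g (t, y.1, y.2) ^ 2) (polarCoord.symm p) =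
      Set.indicator (Set.Icc (t / 4) (t - 2 * δ) ×ˢ Set.Ioo (-Real.pi) Real.pi)
        (fun p : ℝ × ℝ => p.1 * g (t, p.1 * Real.cos p.2, p.1 * Real.sin p.2) ^ 2) p := by
    rintro ⟨r, θ⟩ ⟨hr, hθ⟩
    have hr0 : (0 : ℝ) < r := hr
    have hnorm : (r * Real.cos θ) ^ 2 + (r * Real.sin θ) ^ 2 = r ^ 2 := by
      linear_combination r ^ 2 * Real.sin_sq_add_cos_sq θ
    have hiff : (polarCoord.symm (r, θ) ∈ {y : ℝ × ℝ |
        (t / 4) ^ 2 ≤ y.1 ^ 2 + y.2 ^ 2 ∧ y.1 ^ 2 + y.2 ^ 2 ≤ (t - 2 * δ) ^ 2}) ↔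
        (r, θ) ∈ Set.Icc (t / 4) (t - 2 * δ) ×ˢ Set.Ioo (-Real.pi) Real.pi := by
      simp only [polarCoord_symm_apply, Set.mem_ofPred_eq, hnorm, Set.mem_prod, Set.mem_Icc]
      rw [sq_le_sq₀ (by positivity) hr0.le, sq_le_sq₀ hr0.le (by linarith)]
      exact ⟨fun h => ⟨h, hθ⟩, fun h => h.1⟩
    by_cases h : (r, θ) ∈ Set.Icc (t / 4) (t - 2 * δ) ×ˢ Set.Ioo (-Real.pi) Real.pi
    · rw [Set.indicator_of_mem h, Set.indicator_of_mem (hiff.2 h)]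
      simp
    · rw [Set.indicator_of_notMem h, Set.indicator_of_notMem (mt hiff.1 h), smul_zero]
  rw [sq_L2ann, ← integral_indicator hmeas, ← integral_comp_polarCoord_symm,
    setIntegral_congr_fun polarCoord.open_target.measurableSet hind,
    setIntegral_indicator (measurableSet_Icc.prod measurableSet_Ioo),
    Set.inter_eq_right.2 hsub, Measure.volume_eq_prod, setIntegral_prod]
  · rw [intervalIntegral.integral_of_le hR, integral_Icc_eq_integral_Ioc]
    refine integral_congr_ae (.of_forall fun r => ?_)
    simp only
    rw [intervalIntegral.integral_of_le (by linarith [Real.pi_pos]), integral_Ioc_eq_integral_Ioo]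
  · refine IntegrableOn.mono_set (t := Set.Icc (t / 4) (t - 2 * δ) ×ˢ Set.Icc (-Real.pi) Real.pi)
      ?_ (Set.prod_mono subset_rfl Set.Ioo_subset_Icc_self)
    exact ContinuousOn.integrableOn_compact (isCompact_Icc.prod isCompact_Icc)
      (Continuous.continuousOn (by fun_prop))

lemma fderiv_apply_eq_pd {g : ℝ × ℝ × ℝ → ℝ} (p : ℝ × ℝ × ℝ) (a b : ℝ) :
    fderiv ℝ g p (0, a, b) = a * pd1 g p + b * pd2 g p := by
  have h : ((0, a, b) : ℝ × ℝ × ℝ) = a • (0, 1, 0) + b • (0, 0, 1) := by simp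
  rw [h, map_add, map_smul, map_smul, pd1, pd2, smul_eq_mul, smul_eq_mul]

lemma hasDerivAt_angle {g : ℝ × ℝ × ℝ → ℝ} (hg : Differentiable ℝ g) (t r θ : ℝ) :
    HasDerivAt (fun θ => g (t, r * Real.cos θ, r * Real.sin θ))
      (Om g (t, r * Real.cos θ, r * Real.sin θ)) θ := by
  have hc : HasDerivAt (fun θ => (t, r * Real.cos θ, r * Real.sin θ))
      (0, r * -Real.sin θ, r * Real.cos θ) θ :=
    (hasDerivAt_const θ t).prodMk (((Real.hasDerivAt_cos θ).const_mul r).prodMk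
      ((Real.hasDerivAt_sin θ).const_mul r))
  refine ((hg _).hasFDerivAt.comp_hasDerivAt θ hc).congr_deriv ?_
  rw [fderiv_apply_eq_pd, Om]
  ring

lemma hasDerivAt_radial {g : ℝ × ℝ × ℝ → ℝ} (hg : Differentiable ℝ g) (t r θ : ℝ) :
    HasDerivAt (fun r => g (t, r * Real.cos θ, r * Real.sin θ))
      (Real.cos θ * pd1 g (t, r * Real.cos θ, r * Real.sin θ) +
        Real.sin θ * pd2 g (t, r * Real.cos θ, r * Real.sin θ)) r := by
  have hc : HasDerivAt (fun r => (t, r * Real.cos θ, r * Real.sin θ))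
      (0, 1 * Real.cos θ, 1 * Real.sin θ) r :=
    (hasDerivAt_const r t).prodMk (((hasDerivAt_id r).mul_const _).prodMk
      ((hasDerivAt_id r).mul_const _))
  refine ((hg _).hasFDerivAt.comp_hasDerivAt r hc).congr_deriv ?_
  rw [fderiv_apply_eq_pd, one_mul, one_mul]

lemma continuous_fderiv_apply_const {g : ℝ × ℝ × ℝ → ℝ} (hg : ContDiff ℝ 1 g) (v : ℝ × ℝ × ℝ) :
    Continuous fun p => fderiv ℝ g p v :=
  (hg.continuous_fderiv one_ne_zero).clm_apply continuous_const

lemma continuous_Om {g : ℝ × ℝ × ℝ → ℝ} (hg : ContDiff ℝ 1 g) : Continuous (Om g) := by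
  have h1 : Continuous (pd1 g) := continuous_fderiv_apply_const hg _
  have h2 : Continuous (pd2 g) := continuous_fderiv_apply_const hg _
  unfold Om
  fun_prop

/-- Integrating the Sobolev inequality on circles along a ray crossing the annulus. -/
lemma integral_ray_sq_le {g : ℝ × ℝ × ℝ → ℝ} (hg : ContDiff ℝ 1 g) {t δ θ₀ : ℝ} (ht : 0 < t)
    (hR : t / 4 ≤ t - 2 * δ) (hθ₀ : θ₀ ∈ Set.Icc (-Real.pi) Real.pi) :
    ∫ r in (t / 4)..(t - 2 * δ), g (t, r * Real.cos θ₀, r * Real.sin θ₀) ^ 2 ≤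
      8 / t * (L2ann g t δ ^ 2 + L2ann (Om g) t δ ^ 2) := by
  have hgc := hg.continuous
  have hOm := continuous_Om hg
  rw [sq_L2ann_eq_integral_polar hgc ht hR, sq_L2ann_eq_integral_polar hOm ht hR,
    ← intervalIntegral.integral_add, ← intervalIntegral.integral_const_mul]
  · refine intervalIntegral.integral_mono_on hR (Continuous.intervalIntegrable (by fun_prop) _ _)
      (Continuous.intervalIntegrable ?_ _ _) fun r hr => ?_
    · refine continuous_const.mul (Continuous.add ?_ ?_) <;>
        exact intervalIntegral.continuous_parametric_intervalIntegral_of_continuous' (by fun_prop) _ _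
    · have hsob := sq_le_two_mul_integral_angle
        (fun θ => hasDerivAt_angle (hg.differentiable one_ne_zero) t r θ) (by fun_prop) hθ₀
      have hI : 0 ≤ ∫ θ in (-Real.pi)..Real.pi, (g (t, r * Real.cos θ, r * Real.sin θ) ^ 2 +
          Om g (t, r * Real.cos θ, r * Real.sin θ) ^ 2) :=
        intervalIntegral.integral_nonneg (by linarith [Real.pi_pos]) fun θ _ => by positivity
      have hr1 : 1 ≤ 4 / t * r := by
        rw [div_mul_eq_mul_div, one_le_div ht]
        linarith [hr.1]
      simp only [intervalIntegral.integral_const_mul]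
      rw [← mul_add, ← intervalIntegral.integral_add
        (Continuous.intervalIntegrable (by fun_prop) _ _)
        (Continuous.intervalIntegrable (by fun_prop) _ _)]
      refine hsob.trans ?_
      calc _ ≤ (4 / t * r) * (2 * ∫ θ in (-Real.pi)..Real.pi,
            (g (t, r * Real.cos θ, r * Real.sin θ) ^ 2 +
              Om g (t, r * Real.cos θ, r * Real.sin θ) ^ 2)) :=
            le_mul_of_one_le_left (by positivity) hr1
        _ = _ := by ring
  all_goals
    exact (intervalIntegral.continuous_parametric_intervalIntegral_of_continuous'
      (by fun_prop) _ _).intervalIntegrable _ _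

lemma exists_polar (x : ℝ × ℝ) : ∃ θ ∈ Set.Icc (-Real.pi) Real.pi,
    x.1 = Real.sqrt (x.1 ^ 2 + x.2 ^ 2) * Real.cos θ ∧
      x.2 = Real.sqrt (x.1 ^ 2 + x.2 ^ 2) * Real.sin θ := by
  have hn : ‖(⟨x.1, x.2⟩ : ℂ)‖ = Real.sqrt (x.1 ^ 2 + x.2 ^ 2) := by
    rw [Complex.norm_def, Complex.normSq_mk, sq, sq]
  refine ⟨Complex.arg ⟨x.1, x.2⟩, ⟨(Complex.neg_pi_lt_arg _).le, Complex.arg_le_pi _⟩, ?_, ?_⟩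
  · rw [← hn, Complex.norm_mul_cos_arg]
  · rw [← hn, Complex.norm_mul_sin_arg]

/-- The squared form of the inequality, with the point written in polar coordinates. -/
lemma sq_le_boundary_add_L2ann {f : ℝ × ℝ × ℝ → ℝ} (hf : ContDiff ℝ 2 f) {t δ r θ : ℝ}
    (ht : 0 < t) (hr : r ∈ Set.Icc (t / 4) (t - 2 * δ)) (hθ : θ ∈ Set.Icc (-Real.pi) Real.pi) :
    f (t, r * Real.cos θ, r * Real.sin θ) ^ 2 ≤
      f (t, (t - 2 * δ) * Real.cos θ, (t - 2 * δ) * Real.sin θ) ^ 2 +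
        8 / t * (L2ann f t δ ^ 2 + L2ann (Om f) t δ ^ 2 +
          (L2ann (pd1 f) t δ ^ 2 + L2ann (Om (pd1 f)) t δ ^ 2) +
          (L2ann (pd2 f) t δ ^ 2 + L2ann (Om (pd2 f)) t δ ^ 2)) := by
  have hR := hr.1.trans hr.2
  have hf1 : ContDiff ℝ 1 f := hf.of_le one_le_two
  have hfd : ContDiff ℝ 1 (fderiv ℝ f) := hf.fderiv_right (by norm_num)
  have h1 : ContDiff ℝ 1 (pd1 f) := hfd.clm_apply contDiff_const
  have h2 : ContDiff ℝ 1 (pd2 f) := hfd.clm_apply contDiff_const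
  have c0 := hf1.continuous
  have c1 := h1.continuous
  have c2 := h2.continuous
  have key := sq_le_sq_add_integral_of_hasDerivAt
    (fun r => hasDerivAt_radial (hf1.differentiable one_ne_zero) t r θ) (by fun_prop)
    hr (Set.right_mem_Icc.2 hR)
  have hmono : ∫ s in (t / 4)..(t - 2 * δ), (f (t, s * Real.cos θ, s * Real.sin θ) ^ 2 +
        (Real.cos θ * pd1 f (t, s * Real.cos θ, s * Real.sin θ) +
          Real.sin θ * pd2 f (t, s * Real.cos θ, s * Real.sin θ)) ^ 2) ≤
      ∫ s in (t / 4)..(t - 2 * δ), (f (t, s * Real.cos θ, s * Real.sin θ) ^ 2 +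
        pd1 f (t, s * Real.cos θ, s * Real.sin θ) ^ 2 +
          pd2 f (t, s * Real.cos θ, s * Real.sin θ) ^ 2) := by
    refine intervalIntegral.integral_mono_on hR (Continuous.intervalIntegrable (by fun_prop) _ _)
      (Continuous.intervalIntegrable (by fun_prop) _ _) fun s _ => ?_
    have cauchy (a b : ℝ) : (Real.cos θ * a + Real.sin θ * b) ^ 2 ≤ a ^ 2 + b ^ 2 := by
      have h : (Real.cos θ * a + Real.sin θ * b) ^ 2 + (Real.sin θ * a - Real.cos θ * b) ^ 2 =
          a ^ 2 + b ^ 2 := by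
        linear_combination (a ^ 2 + b ^ 2) * Real.sin_sq_add_cos_sq θ
      linarith [sq_nonneg (Real.sin θ * a - Real.cos θ * b)]
    rw [add_assoc]
    gcongr
    exact cauchy _ _
  replace key := key.trans (add_le_add le_rfl hmono)
  rw [intervalIntegral.integral_add (Continuous.intervalIntegrable (by fun_prop) _ _)
      (Continuous.intervalIntegrable (by fun_prop) _ _),
    intervalIntegral.integral_add (Continuous.intervalIntegrable (by fun_prop) _ _)
      (Continuous.intervalIntegrable (by fun_prop) _ _)] at key
  have i0 := integral_ray_sq_le hf1 ht hR hθ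
  have i1 := integral_ray_sq_le h1 ht hR hθ
  have i2 := integral_ray_sq_le h2 ht hR hθ
  linarith

lemma sum_sq_le_sq_sum {ι : Type*} (s : Finset ι) {u : ι → ℝ} (hu : ∀ i ∈ s, 0 ≤ u i) :
    ∑ i ∈ s, u i ^ 2 ≤ (∑ i ∈ s, u i) ^ 2 := by
  rw [sq (∑ i ∈ s, u i), Finset.sum_mul]
  refine Finset.sum_le_sum fun i hi => ?_
  rw [sq]
  exact mul_le_mul_of_nonneg_left (Finset.single_le_sum hu hi) (hu i hi)

/-- Modified Klainerman–Sobolev inequality (outer region with boundary): for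
`|x| ≥ t/4` with `t − |x| ≥ 2δ`,
`|f(t,x)| ≲ |f(t,B_t^x)| + t^{-1/2} ∑_{a≤1,|β|≤1}‖Ω^a∂^βf‖_{L²(t/4≤|y|≤t−2δ)}`,
where `B_t^x` is the radial projection of `x` to the boundary circle `|y| = t − 2δ`. -/
theorem stmt17 :
    ∃ C : ℝ, 0 < C ∧ ∀ f : ℝ × ℝ × ℝ → ℝ, ContDiff ℝ (⊤ : ℕ∞) f →
      ∀ t δ : ℝ, 1 ≤ t → 0 < δ →
      ∀ x : ℝ × ℝ, (t / 4) ^ 2 ≤ x.1 ^ 2 + x.2 ^ 2 →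
        Real.sqrt (x.1 ^ 2 + x.2 ^ 2) ≤ t - 2 * δ →
        |f (t, x.1, x.2)| ≤
          C * (|f (t, (t - 2 * δ) / Real.sqrt (x.1 ^ 2 + x.2 ^ 2) * x.1,
                    (t - 2 * δ) / Real.sqrt (x.1 ^ 2 + x.2 ^ 2) * x.2)| +
            t ^ (-(1 : ℝ) / 2) *
              (L2ann f t δ + L2ann (pdt f) t δ + L2ann (pd1 f) t δ + L2ann (pd2 f) t δ +
               L2ann (Om f) t δ + L2ann (Om (pdt f)) t δ + L2ann (Om (pd1 f)) t δ +
               L2ann (Om (pd2 f)) t δ)) := by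
  refine ⟨3, by norm_num, fun f hf t δ ht hδ x hx hxR => ?_⟩
  obtain ⟨θ, hθ, hx1, hx2⟩ := exists_polar x
  set r := Real.sqrt (x.1 ^ 2 + x.2 ^ 2)
  have ht0 : 0 < t := by linarith
  have hrt : t / 4 ≤ r := Real.le_sqrt_of_sq_le hx
  have hr0 : r ≠ 0 := by linarith
  have key := sq_le_boundary_add_L2ann (hf.of_le (WithTop.coe_le_coe.2 le_top)) ht0 ⟨hrt, hxR⟩ hθ
  have hB1 : (t - 2 * δ) / r * x.1 = (t - 2 * δ) * Real.cos θ := by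
    rw [hx1]
    field_simp
  have hB2 : (t - 2 * δ) / r * x.2 = (t - 2 * δ) * Real.sin θ := by
    rw [hx2]
    field_simp
  rw [hB1, hB2]
  rw [← hx1, ← hx2] at key
  have hs0 : 0 ≤ t ^ (-(1 : ℝ) / 2) := by positivity
  have hs : (t ^ (-(1 : ℝ) / 2)) ^ 2 = 1 / t := by
    rw [← Real.rpow_natCast, ← Real.rpow_mul ht0.le]
    norm_num [Real.rpow_neg_one]
  have hL (g : ℝ × ℝ × ℝ → ℝ) : 0 ≤ L2ann g t δ := Real.sqrt_nonneg _
  set S := L2ann f t δ + L2ann (pdt f) t δ + L2ann (pd1 f) t δ + L2ann (pd2 f) t δ +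
    L2ann (Om f) t δ + L2ann (Om (pdt f)) t δ + L2ann (Om (pd1 f)) t δ +
    L2ann (Om (pd2 f)) t δ
  have hS : 0 ≤ S := by
    linarith [hL f, hL (pdt f), hL (pd1 f), hL (pd2 f), hL (Om f), hL (Om (pdt f)),
      hL (Om (pd1 f)), hL (Om (pd2 f))]
  have hsum : L2ann f t δ ^ 2 + L2ann (Om f) t δ ^ 2 +
      (L2ann (pd1 f) t δ ^ 2 + L2ann (Om (pd1 f)) t δ ^ 2) +
      (L2ann (pd2 f) t δ ^ 2 + L2ann (Om (pd2 f)) t δ ^ 2) ≤ S ^ 2 := by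
    have h := sum_sq_le_sq_sum Finset.univ (u := ![L2ann f t δ, L2ann (pdt f) t δ,
      L2ann (pd1 f) t δ, L2ann (pd2 f) t δ, L2ann (Om f) t δ, L2ann (Om (pdt f)) t δ,
      L2ann (Om (pd1 f)) t δ, L2ann (Om (pd2 f)) t δ])
      (fun i _ => by fin_cases i <;> exact hL _)
    simp only [Fin.sum_univ_eight] at h
    change _ ≤ S ^ 2 at h
    refine le_trans ?_ h
    simp
    linarith [sq_nonneg (L2ann (pdt f) t δ), sq_nonneg (L2ann (Om (pdt f)) t δ)]
  clear_value S
  refine abs_le_of_sq_le_sq ?_ (by positivity)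
  have hbound := mul_le_mul_of_nonneg_left hsum (show 0 ≤ 8 / t by positivity)
  have hSq : (t ^ (-(1 : ℝ) / 2) * S) ^ 2 = 1 / t * S ^ 2 := by rw [mul_pow, hs]
  have h8 : 8 / t * S ^ 2 = 8 * (t ^ (-(1 : ℝ) / 2) * S) ^ 2 := by
    rw [hSq]
    ring
  have hT : 0 ≤ t ^ (-(1 : ℝ) / 2) * S := mul_nonneg hs0 hS
  have hA := abs_nonneg (f (t, (t - 2 * δ) * Real.cos θ, (t - 2 * δ) * Real.sin θ))
  rw [← sq_abs (f (t, (t - 2 * δ) * Real.cos θ, (t - 2 * δ) * Real.sin θ))] at key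
  nlinarith [mul_nonneg hA hT]
end
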